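/- (Proposition 4.2) Let N ≥ 1 be an integer, k > 0, s ≥ 1 an integer, and b₁,…,b_s nonzero real numbers. Given any real-valued U ∈ S_N, there exist real-valued Y^1,…,Y^s ∈ S_N satisfying the s-stage composition step: Y^1 = U + k b₁ F((Y^1 + U)/2) and Y^i = Y^{i−1} + k b_i F((Y^i + Y^{i−1})/2) for 2 ≤ i ≤ s. (No smallness condition on k is required.) -/

import Mathlib

noncomputable section

namespace KdVSpec

/-- The L² inner product of two real-valued functions on `(-π, π)`. -/
def L2inner (u v : ℝ → ℝ) : ℝ := ∫ x in (-Real.pi)..Real.pi, u x * v x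

/-- The L² norm of a real-valued function on `(-π, π)`. -/
def L2norm (u : ℝ → ℝ) : ℝ := Real.sqrt (∫ x in (-Real.pi)..Real.pi, (u x)^2)

/-- The sup norm of a real-valued function on `[-π, π]`. -/
def LinfNorm (u : ℝ → ℝ) : ℝ := sSup ((fun x => |u x|) '' Set.Icc (-Real.pi) Real.pi)

/-- The `W^{1,∞}` norm `‖v‖_{1,∞} = |v|_∞ + |∂ₓ v|_∞`. -/
def norm1inf (u : ℝ → ℝ) : ℝ := LinfNorm u + LinfNorm (deriv u)

/-- The `k`-th Fourier coefficient of a (2π-periodic) function on `(-π,π)`. -/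
def fCoeff (u : ℝ → ℝ) (k : ℤ) : ℂ :=
  (1 / (2 * Real.pi)) *
    ∫ x in (-Real.pi)..Real.pi, Complex.exp (-(Complex.I * (k : ℂ) * (x : ℂ))) * (u x : ℂ)

/-- The periodic Sobolev norm of order `μ`. -/
def sobNorm (μ : ℝ) (u : ℝ → ℝ) : ℝ :=
  Real.sqrt (∑' k : ℤ, (1 + (k : ℝ)^2) ^ μ * ‖fCoeff u k‖^2)

/-- `v` is a (real-valued) trigonometric polynomial of degree at most `N`,
i.e. a member of `S_N = span{e^{ikx} : |k| ≤ N}`. -/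
def InSN (N : ℕ) (v : ℝ → ℝ) : Prop :=
  ∃ c : ℤ → ℂ, ∀ x : ℝ,
    (v x : ℂ) = ∑ k ∈ Finset.Icc (-(N : ℤ)) (N : ℤ), c k * Complex.exp (Complex.I * (k : ℂ) * (x : ℂ))

/-- The orthogonal L²-projection onto `S_N`, `P_N v = Σ_{|k|≤N} v̂(k) e^{ikx}`. -/
def PN (N : ℕ) (u : ℝ → ℝ) : ℝ → ℝ := fun x =>
  (∑ k ∈ Finset.Icc (-(N : ℤ)) (N : ℤ), fCoeff u k * Complex.exp (Complex.I * (k : ℂ) * (x : ℂ))).re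

/-- Spatial derivative `∂ₓ`. -/
def dx (u : ℝ → ℝ) : ℝ → ℝ := deriv u

/-- Third spatial derivative `∂ₓ³`. -/
def dx3 (u : ℝ → ℝ) : ℝ → ℝ := deriv (deriv (deriv u))

/-- The map `F(v) = -∂ₓ³ v - P_N(v ∂ₓ v)` on `S_N`. -/
def Fmap (N : ℕ) (v : ℝ → ℝ) : ℝ → ℝ := fun x =>
  -(dx3 v x) - PN N (fun y => v y * dx v y) x

/-- `u` solves the periodic KdV equation `u_t + u u_x + u_{xxx} = 0` on the time set `I`
(with 2π-periodicity in space). -/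
def IsKdVSolution (u : ℝ → ℝ → ℝ) (I : Set ℝ) : Prop :=
  (∀ t ∈ I, ∀ x : ℝ, u t (x + 2 * Real.pi) = u t x) ∧
  (∀ t ∈ I, ∀ x : ℝ,
    deriv (fun s => u s x) t + u t x * dx (u t) x + dx3 (u t) x = 0)

/-- `w` is the semidiscrete Fourier–Galerkin approximation (with initial value `P_N u₀`)
on the time set `I`: `w(t) ∈ S_N`, `w` is differentiable in time, `w(0) = P_N u₀` and
`(∂_t w + w ∂ₓ w + ∂ₓ³ w, χ) = 0` for every `χ ∈ S_N`. -/
def SemidiscreteOn (N : ℕ) (u0 : ℝ → ℝ) (w : ℝ → ℝ → ℝ) (I : Set ℝ) : Prop :=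
  (∀ t ∈ I, InSN N (w t)) ∧
  (∀ x : ℝ, ∀ t ∈ I, DifferentiableAt ℝ (fun s => w s x) t) ∧
  (∀ x : ℝ, w 0 x = PN N u0 x) ∧
  (∀ t ∈ I, ∀ χ : ℝ → ℝ, InSN N χ →
    L2inner (fun x => deriv (fun s => w s x) t + w t x * dx (w t) x + dx3 (w t) x) χ = 0)

/-!
On `S_N` one has `(F(v), v) = 0`: both `∂ₓ³ v` and `v ∂ₓ v` are orthogonal to `v` by periodicity,
and `P_N` does not change the pairing with `v ∈ S_N`. With `z = (Y + U) / 2`, the step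
`Y = U + a F((Y + U) / 2)` reads `z - U - (a / 2) F(z) = 0`, and the inner product of the left side
with `z` is `‖z‖² - (U, z)`, which is positive on large spheres whatever the size of `a`. A smooth
field on a finite-dimensional Euclidean space that points outwards along a sphere has a zero inside
it. To see this, reduce to a field `x + h x` with `h` supported in a ball `B`, for which
`∫_B det (1 + Dh) φ(‖x + h x‖²) = ∫_B φ(‖x‖²)`; if the field had no zero, a bump `φ` concentrated
near `0` would make the left side zero and the right side positive.
-/

section PolynomialFamily

open MeasureTheory Polynomial

variable {α E : Type*} [TopologicalSpace α]

/-- A real function of `t : ℝ` and `x : α` that is a polynomial in `t` whose coefficients are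
continuous functions of `x`. The polynomial is kept as an element of `C(α, ℝ)[X]`, so that
determinants and compositions can be formed there. -/
def IsPolynomialFamily (F : ℝ → α → ℝ) : Prop :=
  ∃ q : C(α, ℝ)[X], ∀ t x, F t x = aevalTower (ContinuousMap.evalAlgHom ℝ ℝ x) t q

namespace IsPolynomialFamily

protected lemma mul {F G : ℝ → α → ℝ} (hF : IsPolynomialFamily F) (hG : IsPolynomialFamily G) :
    IsPolynomialFamily fun t x => F t x * G t x := by
  obtain ⟨p, hp⟩ := hF
  obtain ⟨q, hq⟩ := hG
  exact ⟨p * q, fun t x => by simp only [map_mul, hp, hq]⟩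

lemma polynomial_eval {F : ℝ → α → ℝ} (hF : IsPolynomialFamily F) (p : ℝ[X]) :
    IsPolynomialFamily fun t x => p.eval (F t x) := by
  obtain ⟨q, hq⟩ := hF
  exact ⟨aeval q p, fun t x => by simp only [← aeval_algHom_apply, ← hq, coe_aeval_eq_eval]⟩

lemma det_id_add_smul [NormedAddCommGroup E] [NormedSpace ℝ E] [FiniteDimensional ℝ E]
    {A : α → E →L[ℝ] E} (hA : Continuous A) :
    IsPolynomialFamily fun t x => (ContinuousLinearMap.id ℝ E + t • A x).det := by
  classical
  let b := Module.finBasis ℝ E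
  have hentry (i j) : Continuous fun x => LinearMap.toMatrix b b (A x : E →ₗ[ℝ] E) i j := by
    simp only [LinearMap.toMatrix_apply]
    exact (b.coord i).continuous_of_finiteDimensional.comp (hA.clm_apply continuous_const)
  let D : Matrix _ _ C(α, ℝ) := .of fun i j => ⟨_, hentry i j⟩
  refine ⟨(1 + (X : C(α, ℝ)[X]) • D.map C).det, fun t x => ?_⟩
  rw [AlgHom.map_det]
  change LinearMap.det (LinearMap.id + t • (A x : E →ₗ[ℝ] E)) = _
  rw [← LinearMap.det_toMatrix b]
  congr 1
  ext i j
  simp only [map_add, map_smul, LinearMap.toMatrix_id_eq_basis_toMatrix, Module.Basis.toMatrix_self,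
    Matrix.add_apply, Matrix.one_apply, Matrix.smul_apply, smul_eq_mul, AlgHom.mapMatrix_apply,
    Matrix.map_apply, Matrix.of_apply, X_mul_C, map_one, map_mul, aevalTower_C,
    aevalTower_X, ContinuousMap.evalAlgHom_apply, ContinuousMap.coe_mk, D]
  ring

lemma norm_add_smul_sq [NormedAddCommGroup E] [InnerProductSpace ℝ E] {f g : α → E}
    (hf : Continuous f) (hg : Continuous g) :
    IsPolynomialFamily fun t x => ‖f x + t • g x‖ ^ 2 := by
  refine ⟨C ⟨fun x => ‖f x‖ ^ 2, by fun_prop⟩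
    + C ⟨fun x => 2 * inner ℝ (f x) (g x), by fun_prop⟩ * X
    + C ⟨fun x => ‖g x‖ ^ 2, by fun_prop⟩ * X ^ 2, fun t x => ?_⟩
  beta_reduce
  rw [norm_add_sq_real, norm_smul, inner_smul_right, mul_pow, Real.norm_eq_abs, sq_abs]
  simp only [map_add, map_mul, map_pow, aevalTower_C, aevalTower_X,
    ContinuousMap.evalAlgHom_apply, ContinuousMap.coe_mk]
  ring

variable [MeasurableSpace α] {μ : Measure α} {F : ℝ → α → ℝ}

lemma exists_integral_eq_eval (hF : IsPolynomialFamily F) (hμ : ∀ f : C(α, ℝ), Integrable f μ) :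
    ∃ r : ℝ[X], ∀ t, ∫ x, F t x ∂μ = r.eval t := by
  obtain ⟨q, hq⟩ := hF
  refine ⟨∑ i ∈ q.support, monomial i (∫ x, q.coeff i x ∂μ), fun t => ?_⟩
  have hsum (x : α) : F t x = ∑ i ∈ q.support, q.coeff i x * t ^ i := by
    rw [hq, aevalTower, eval₂AlgHom_apply, eval₂_eq_sum]
    rfl
  simp only [hsum, eval_finsetSum, eval_monomial]
  rw [integral_finsetSum _ fun i _ => (hμ _).mul_const _]
  simp only [integral_mul_const]

lemma integral_eq_of_forall_Ioo (hF : IsPolynomialFamily F)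
    (hμ : ∀ f : C(α, ℝ), Integrable f μ) {c δ : ℝ} (hδ : 0 < δ)
    (hc : ∀ t ∈ Set.Ioo 0 δ, ∫ x, F t x ∂μ = c) (t : ℝ) : ∫ x, F t x ∂μ = c := by
  obtain ⟨r, hr⟩ := hF.exists_integral_eq_eval hμ
  have hconst : r = C c := eq_of_infinite_eval_eq _ _ <|
    (Set.Ioo_infinite hδ).mono fun t ht => by
      rw [Set.mem_ofPred_eq, ← hr, hc t ht, eval_C]
  rw [hr, hconst, eval_C]

end IsPolynomialFamily

end PolynomialFamily

section PerturbationOfIdentity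

variable {E : Type*} [NormedAddCommGroup E] [NormedSpace ℝ E]

lemma bijective_id_add_of_lipschitzWith [CompleteSpace E] {g : E → E} {K : NNReal}
    (hg : LipschitzWith K g) (hK : K < 1) : Function.Bijective fun x => x + g x := by
  have happrox : ApproximatesLinearOn (fun x => x + g x)
      (ContinuousLinearEquiv.refl ℝ E : E →L[ℝ] E) Set.univ K := by
    rw [ApproximatesLinearOn.approximatesLinearOn_iff_lipschitzOnWith]
    convert hg.lipschitzOnWith using 1
    ext x
    simp
  have hsmall : Subsingleton E ∨
      K < ‖((ContinuousLinearEquiv.refl ℝ E).symm : E →L[ℝ] E)‖₊⁻¹ := by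
    refine (subsingleton_or_nontrivial E).imp_right fun _ => ?_
    have : NontrivialTopology E := EMetric.nontrivial_iff_nontrivialTopology.mp ‹_›
    rwa [ContinuousLinearEquiv.refl_symm, ContinuousLinearEquiv.coe_refl,
      ContinuousLinearMap.nnnorm_id, inv_one]
  exact ⟨Set.injOn_univ.mp (happrox.injOn hsmall), happrox.surjective hsmall⟩

lemma det_id_add_pos_of_norm_lt_one [FiniteDimensional ℝ E] {A : E →L[ℝ] E} (hA : ‖A‖ < 1) :
    0 < (ContinuousLinearMap.id ℝ E + A).det := by
  have : CompleteSpace E := FiniteDimensional.complete ℝ E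
  have hcont : Continuous fun B : E →L[ℝ] E => (ContinuousLinearMap.id ℝ E + B).det :=
    ContinuousLinearMap.continuous_det.comp (by fun_prop)
  have hne (B : E →L[ℝ] E) (hB : ‖B‖ < 1) : (ContinuousLinearMap.id ℝ E + B).det ≠ 0 := by
    have hunit : IsUnit (ContinuousLinearMap.id ℝ E + B) := by
      simpa using! isUnit_one_sub_of_norm_lt_one (x := -B) (by rwa [norm_neg])
    exact ((hunit.map ContinuousLinearMap.toLinearMapRingHom).map LinearMap.det).ne_zero
  by_contra! hneg
  have hzero : (ContinuousLinearMap.id ℝ E + (0 : E →L[ℝ] E)).det = 1 := by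
    simp [ContinuousLinearMap.det]
  obtain ⟨B, hB, hdet⟩ := (convex_ball (0 : E →L[ℝ] E) 1).isPreconnected.intermediate_value
    (mem_ball_zero_iff.mpr hA) (Metric.mem_ball_self one_pos) hcont.continuousOn
    ⟨hneg, hzero ▸ zero_le_one⟩
  exact hne B (mem_ball_zero_iff.mp hB) hdet

open MeasureTheory

lemma setIntegral_det_id_add_fderiv_mul_comp [FiniteDimensional ℝ E] [MeasurableSpace E]
    [BorelSpace E] (μ : Measure E) [μ.IsAddHaarMeasure] {g : E → E} {K : NNReal} {s : Set E}
    (hs : MeasurableSet s) (hdiff : Differentiable ℝ g) (hg : LipschitzWith K g) (hK : K < 1)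
    (hsupp : ∀ x ∉ s, g x = 0) (φ : E → ℝ) :
    ∫ x in s, (ContinuousLinearMap.id ℝ E + fderiv ℝ g x).det * φ (x + g x) ∂μ
      = ∫ x in s, φ x ∂μ := by
  have : CompleteSpace E := FiniteDimensional.complete ℝ E
  have hbij := bijective_id_add_of_lipschitzWith hg hK
  have himage : (fun x => x + g x) '' s = s := by
    have hcompl : (fun x => x + g x) '' sᶜ = sᶜ := by
      rw [Set.image_congr fun x hx => by rw [hsupp x hx, add_zero], Set.image_id']
    rwa [Set.image_compl_eq hbij, compl_inj_iff] at hcompl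
  have hchange := integral_image_eq_integral_abs_det_fderiv_smul μ hs
    (fun x _ => ((hasFDerivAt_id x).add (hdiff x).hasFDerivAt).hasFDerivWithinAt)
    hbij.injective.injOn φ
  change ∫ x in (fun x => x + g x) '' s, φ x ∂μ = _ at hchange
  rw [himage] at hchange
  rw [hchange]
  congr 1 with x
  rw [abs_of_pos (det_id_add_pos_of_norm_lt_one
    ((norm_fderiv_le_of_lipschitz ℝ hg).trans_lt (mod_cast hK)))]
  rfl

end PerturbationOfIdentity

section ZerosOfFields

open MeasureTheory Polynomial

lemma integrableOn_ball_of_continuous {X : Type*} [MetricSpace X] [ProperSpace X]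
    [MeasurableSpace X] [OpensMeasurableSpace X] {μ : Measure X} [IsFiniteMeasureOnCompacts μ]
    {f : X → ℝ} (hf : Continuous f) (c : X) (r : ℝ) : IntegrableOn f (Metric.ball c r) μ :=
  (hf.continuousOn.integrableOn_compact (isCompact_closedBall c r)).mono_set
    Metric.ball_subset_closedBall

lemma abs_setIntegral_mul_sub_le {X : Type*} [MeasurableSpace X] {μ : Measure X} {s : Set X}
    {J f g : X → ℝ} {ε : ℝ} (hs : MeasurableSet s) (hμ : μ s ≠ ⊤) (hJ : IntegrableOn J s μ)
    (hf : ∀ x ∈ s, |f x| ≤ ε) (hg : ∀ x ∈ s, |g x| ≤ ε) :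
    |∫ x in s, (J x * f x - g x) ∂μ| ≤ ε * ∫ x in s, (|J x| + 1) ∂μ := by
  rw [← integral_const_mul, ← Real.norm_eq_abs]
  refine norm_integral_le_of_norm_le (Integrable.const_mul (hJ.abs.add (integrableOn_const hμ)) ε)
    (ae_restrict_of_forall_mem hs fun x hx => ?_)
  calc |J x * f x - g x| ≤ |J x| * |f x| + |g x| := by rw [← abs_mul]; exact abs_sub _ _
    _ ≤ |J x| * ε + ε := by gcongr <;> simp only [hf x hx, hg x hx]
    _ = ε * (|J x| + 1) := by ring

lemma continuous_det_id_add_fderiv {E : Type*} [NormedAddCommGroup E] [NormedSpace ℝ E] {h : E → E}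
    (hh : ContDiff ℝ 1 h) :
    Continuous fun x => (ContinuousLinearMap.id ℝ E + fderiv ℝ h x).det :=
  ContinuousLinearMap.continuous_det.comp (continuous_const.add (hh.continuous_fderiv one_ne_zero))

variable {E : Type*} [NormedAddCommGroup E] [InnerProductSpace ℝ E] [FiniteDimensional ℝ E]

section Integral

variable [MeasurableSpace E] [BorelSpace E] {μ : Measure E} [μ.IsAddHaarMeasure]
  {h : E → E} {R : ℝ}

-- Replacing `h` by `t • h`, the identity holds for small `t` by a change of variables. The left
-- side is a polynomial in `t`, so the identity persists up to `t = 1`, where `x + h x` need not be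
-- injective.
lemma setIntegral_ball_det_mul_eval_norm_sq (hh : ContDiff ℝ 1 h)
    (hsupp : ∀ x ∉ Metric.ball 0 R, h x = 0) (p : ℝ[X]) :
    ∫ x in Metric.ball 0 R,
        (ContinuousLinearMap.id ℝ E + fderiv ℝ h x).det * p.eval (‖x + h x‖ ^ 2) ∂μ
      = ∫ x in Metric.ball 0 R, p.eval (‖x‖ ^ 2) ∂μ := by
  have hcompact : HasCompactSupport h :=
    HasCompactSupport.intro (isCompact_closedBall 0 R) fun x hx =>
      hsupp x fun hx' => hx (Metric.ball_subset_closedBall hx')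
  obtain ⟨K, hK⟩ := hh.lipschitzWith_of_hasCompactSupport hcompact one_ne_zero
  have hfamily : IsPolynomialFamily fun t x =>
      (ContinuousLinearMap.id ℝ E + t • fderiv ℝ h x).det * p.eval (‖x + t • h x‖ ^ 2) :=
    (IsPolynomialFamily.det_id_add_smul (hh.continuous_fderiv one_ne_zero)).mul
      ((IsPolynomialFamily.norm_add_smul_sq continuous_id hh.continuous).polynomial_eval p)
  have hsmall : ∀ t ∈ Set.Ioo (0 : ℝ) (K + 1)⁻¹, ∫ x in Metric.ball 0 R,
      (ContinuousLinearMap.id ℝ E + t • fderiv ℝ h x).det * p.eval (‖x + t • h x‖ ^ 2) ∂μ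
        = ∫ x in Metric.ball 0 R, p.eval (‖x‖ ^ 2) ∂μ := by
    intro t ht
    have hlip : LipschitzWith (‖t‖₊ * K) fun x => t • h x := (lipschitzWith_smul t).comp hK
    have hlt : ‖t‖₊ * K < 1 := by
      have htK := (lt_inv_comm₀ ht.1 (by positivity)).mp ht.2
      rw [← NNReal.coe_lt_coe, NNReal.coe_mul, coe_nnnorm, Real.norm_of_nonneg ht.1.le,
        NNReal.coe_one, ← lt_inv_mul_iff₀ ht.1, mul_one]
      linarith
    have hdiff := hh.differentiable one_ne_zero
    have hchange := setIntegral_det_id_add_fderiv_mul_comp μ measurableSet_ball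
      (hdiff.const_smul t) hlip hlt (fun x hx => by rw [Pi.smul_apply, hsupp x hx, smul_zero])
      (fun x => p.eval (‖x‖ ^ 2))
    simpa only [fderiv_const_smul (hdiff _), Pi.smul_apply] using hchange
  simpa only [one_smul] using hfamily.integral_eq_of_forall_Ioo
    (fun f => integrableOn_ball_of_continuous f.continuous 0 R) (by positivity) hsmall 1

lemma setIntegral_ball_det_mul_comp_norm_sq (hh : ContDiff ℝ 1 h)
    (hsupp : ∀ x ∉ Metric.ball 0 R, h x = 0) {φ : ℝ → ℝ} (hφ : Continuous φ) :
    ∫ x in Metric.ball 0 R,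
        (ContinuousLinearMap.id ℝ E + fderiv ℝ h x).det * φ (‖x + h x‖ ^ 2) ∂μ
      = ∫ x in Metric.ball 0 R, φ (‖x‖ ^ 2) ∂μ := by
  set J : E → ℝ := fun x => (ContinuousLinearMap.id ℝ E + fderiv ℝ h x).det
  set B := Metric.ball (0 : E) R
  have hJ : Continuous J := continuous_det_id_add_fderiv hh
  have hhc := hh.continuous
  have hint {f : E → ℝ} (hf : Continuous f) : IntegrableOn f B μ :=
    integrableOn_ball_of_continuous hf 0 R
  let defect (ψ : ℝ → ℝ) : ℝ := ∫ x in B, (J x * ψ (‖x + h x‖ ^ 2) - ψ (‖x‖ ^ 2)) ∂μ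
  have hdefect {ψ : ℝ → ℝ} (hψ : Continuous ψ) :
      defect ψ = ∫ x in B, J x * ψ (‖x + h x‖ ^ 2) ∂μ - ∫ x in B, ψ (‖x‖ ^ 2) ∂μ :=
    integral_sub (hint (by fun_prop)) (hint (by fun_prop))
  obtain ⟨M, hM⟩ := (isCompact_closedBall (0 : E) R).bddAbove_image
    (f := fun x => max (‖x‖ ^ 2) (‖x + h x‖ ^ 2)) (by fun_prop)
  have hbound {x : E} (hx : x ∈ B) : max (‖x‖ ^ 2) (‖x + h x‖ ^ 2) ≤ M :=
    hM (Set.mem_image_of_mem _ (Metric.ball_subset_closedBall hx))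
  have happrox (ε : ℝ) (hε : 0 < ε) : |defect φ| ≤ ε * ∫ x in B, (|J x| + 1) ∂μ := by
    obtain ⟨p, hp⟩ := exists_polynomial_near_of_continuousOn 0 M φ hφ.continuousOn ε hε
    have hpoly : defect p.eval = 0 := by
      rw [hdefect p.continuous, setIntegral_ball_det_mul_eval_norm_sq hh hsupp p, sub_self]
    have hsub : defect φ = defect fun s => φ s - p.eval s := by
      rw [← sub_zero (defect φ), ← hpoly, ← integral_sub (hint (by fun_prop)) (hint (by fun_prop))]
      congr 1 with x
      ring
    rw [hsub]
    refine abs_setIntegral_mul_sub_le measurableSet_ball measure_ball_lt_top.ne (hint hJ)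
      (fun x hx => ?_) fun x hx => ?_ <;> rw [abs_sub_comm]
    · exact (hp _ ⟨by positivity, (le_max_right _ _).trans (hbound hx)⟩).le
    · exact (hp _ ⟨by positivity, (le_max_left _ _).trans (hbound hx)⟩).le
  have hlim : Filter.Tendsto (fun ε => ε * ∫ x in B, (|J x| + 1) ∂μ) (nhdsWithin 0 (Set.Ioi 0))
      (nhds 0) := by
    simpa using (continuous_id.mul_const _).tendsto (0 : ℝ) |>.mono_left nhdsWithin_le_nhds
  have hzero : defect φ = 0 := abs_nonpos_iff.mp <|
    ge_of_tendsto hlim (Filter.mem_of_superset self_mem_nhdsWithin happrox)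
  rwa [hdefect hφ, sub_eq_zero] at hzero

end Integral

lemma exists_add_eq_zero_of_eq_zero_off_ball {h : E → E} {R : ℝ} (hh : ContDiff ℝ 1 h) (hR : 0 < R)
    (hsupp : ∀ x ∉ Metric.ball 0 R, h x = 0) : ∃ x, x + h x = 0 := by
  have hhc := hh.continuous
  by_contra! hne
  obtain ⟨x₀, -, hmin⟩ := (isCompact_closedBall (0 : E) R).exists_isMinOn
    ⟨0, Metric.mem_closedBall_self hR.le⟩ (f := fun x => ‖x + h x‖) (by fun_prop)
  set ε := ‖x₀ + h x₀‖
  have hε : 0 < ε := norm_pos_iff.mpr (hne x₀)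
  let φ : ℝ → ℝ := fun s => max 0 (ε ^ 2 - s)
  have hφ : Continuous φ := by fun_prop
  have hφ_add {x : E} (hx : x ∈ Metric.ball 0 R) : φ (‖x + h x‖ ^ 2) = 0 := by
    have hle : ε ≤ ‖x + h x‖ := hmin (Metric.ball_subset_closedBall hx)
    exact max_eq_left (sub_nonpos.mpr (by gcongr))
  borelize E
  have hint := setIntegral_ball_det_mul_comp_norm_sq (μ := Measure.addHaar) hh hsupp hφ
  rw [setIntegral_congr_fun measurableSet_ball fun x hx => by rw [hφ_add hx, mul_zero],
    integral_zero] at hint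
  have hopen : IsOpen (Function.support (fun x : E => φ (‖x‖ ^ 2)) ∩ Metric.ball 0 R) :=
    (Continuous.isOpen_support (by fun_prop)).inter Metric.isOpen_ball
  have hpos := (setIntegral_pos_iff_support_of_nonneg_ae (.of_forall fun x => le_max_left _ _)
    (integrableOn_ball_of_continuous (by fun_prop) 0 R)).mpr
    (hopen.measure_pos Measure.addHaar ⟨0, by simp [φ, hε.ne', hR]⟩)
  exact hpos.ne hint

lemma dist_div_norm_smul_self {V : Type*} [NormedAddCommGroup V] [NormedSpace ℝ V] {x : V} {R : ℝ}
    (hR : 0 ≤ R) (hx : R ≤ ‖x‖) : dist x ((R / ‖x‖) • x) = ‖x‖ - R := by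
  obtain rfl | hx₀ := eq_or_ne x 0
  · simpa using (hR.antisymm (by simpa using hx)).symm
  have hratio : 0 ≤ 1 - R / ‖x‖ := sub_nonneg.mpr (div_le_one_of_le₀ hx (norm_nonneg x))
  calc dist x ((R / ‖x‖) • x) = ‖(1 - R / ‖x‖) • x‖ := by rw [dist_eq_norm, sub_smul, one_smul]
    _ = ‖x‖ - R := by
      rw [norm_smul, Real.norm_of_nonneg hratio, sub_mul, one_mul,
        div_mul_cancel₀ _ (norm_ne_zero_iff.mpr hx₀)]

lemma exists_norm_le_eq_zero_of_inner_pos {G : E → E} {R : ℝ} (hG : ContDiff ℝ 1 G) (hR : 0 < R)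
    (hpos : ∀ x, ‖x‖ = R → 0 < inner ℝ (G x) x) : ∃ x, ‖x‖ ≤ R ∧ G x = 0 := by
  have hopen : IsOpen {x | 0 < inner ℝ (G x) x} :=
    isOpen_lt continuous_const (hG.continuous.inner continuous_id)
  obtain ⟨δ, hδ, hthick⟩ := (isCompact_sphere (0 : E) R).exists_thickening_subset_open hopen
    fun x hx => hpos x (mem_sphere_zero_iff_norm.mp hx)
  let χ : ContDiffBump (0 : E) := ⟨R, R + δ, hR, by linarith⟩
  have hχ_zero {x : E} (hx : R + δ ≤ ‖x‖) : χ x = 0 := χ.zero_of_le_dist (by simpa using hx)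
  obtain ⟨x, hx⟩ := exists_add_eq_zero_of_eq_zero_off_ball (h := fun x => χ x • (G x - x))
    (χ.contDiff.smul (hG.sub contDiff_id)) (add_pos hR hδ)
    fun x hx => by rw [hχ_zero (by simpa using hx), zero_smul]
  obtain hxR | hxR := le_or_gt ‖x‖ R
  · rw [χ.one_of_mem_closedBall (by simpa using hxR), one_smul, add_sub_cancel] at hx
    exact ⟨x, hxR, hx⟩
  have hinner : (1 - χ x) * ‖x‖ ^ 2 + χ x * inner ℝ (G x) x = 0 := by
    have hinner_zero := congrArg (inner ℝ · x) hx
    simp only [inner_add_left, real_inner_smul_left, inner_sub_left, real_inner_self_eq_norm_sq,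
      inner_zero_left] at hinner_zero
    linear_combination hinner_zero
  have hx_pos : 0 < ‖x‖ ^ 2 := pow_pos (hR.trans hxR) 2
  obtain hxδ | hxδ := le_or_gt (R + δ) ‖x‖
  · rw [hχ_zero hxδ] at hinner
    linarith
  · have hG_pos : 0 < inner ℝ (G x) x := by
      refine hthick (Metric.mem_thickening_iff.mpr ⟨(R / ‖x‖) • x, ?_, ?_⟩)
      · rw [mem_sphere_zero_iff_norm, norm_smul, norm_div, norm_norm, Real.norm_of_nonneg hR.le,
          div_mul_cancel₀ _ (hR.trans hxR).ne']
      · rw [dist_div_norm_smul_self hR.le hxR.le]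
        linarith
    exact ((convex_Ioi (0 : ℝ) hx_pos hG_pos (sub_nonneg.mpr χ.le_one) χ.nonneg
      (sub_add_cancel 1 (χ x))).ne' hinner).elim

lemma exists_eq_add_of_inner_self_eq_zero {F : E → E} (hF : ContDiff ℝ 1 F)
    (horth : ∀ v, inner ℝ (F v) v = 0) (u : E) : ∃ z, z = u + F z := by
  have hcoercive (z : E) (hz : ‖z‖ = ‖u‖ + 1) : 0 < inner ℝ (z - (u + F z)) z := by
    rw [inner_sub_left, inner_add_left, horth, add_zero, real_inner_self_eq_norm_sq]
    nlinarith [real_inner_le_norm u z, norm_nonneg u]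
  obtain ⟨z, -, hz⟩ := exists_norm_le_eq_zero_of_inner_pos
    (contDiff_id.sub (contDiff_const.add hF)) (by positivity) hcoercive
  exact ⟨z, sub_eq_zero.mp hz⟩

end ZerosOfFields

lemma exists_midpoint_eq_of_quadratic {V : Type*} [AddCommGroup V] [Module ℝ V]
    [FiniteDimensional ℝ V] (core : InnerProductSpace.Core ℝ V) (L : V →ₗ[ℝ] V)
    (Q : V →ₗ[ℝ] V →ₗ[ℝ] V) (horth : ∀ v, core.inner (L v + Q v v) v = 0) (a : ℝ) (u : V) :
    ∃ y, y = u + a • (L ((2⁻¹ : ℝ) • (y + u)) + Q ((2⁻¹ : ℝ) • (y + u)) ((2⁻¹ : ℝ) • (y + u))) := by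
  let _ := core.toNormedAddCommGroup
  let _ := InnerProductSpace.ofCore core.toCore
  let F (v : V) : V := (a / 2) • (L v + Q v v)
  have hF : ContDiff ℝ 1 F := by
    let Q' : V →L[ℝ] V →L[ℝ] V := Q.toContinuousBilinearMap
    exact ((L.toContinuousLinearMap.contDiff).add
      ((Q'.contDiff).clm_apply contDiff_id)).const_smul (a / 2)
  obtain ⟨z, hz⟩ := exists_eq_add_of_inner_self_eq_zero hF (fun v => by
    rw [real_inner_smul_left]
    exact mul_eq_zero_of_right _ (horth v)) u
  have hmid : (2⁻¹ : ℝ) • ((2 : ℝ) • z - u + u) = z := by module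
  refine ⟨(2 : ℝ) • z - u, ?_⟩
  rw [hmid]
  linear_combination (norm := module) (2 : ℝ) • hz

section PeriodicEnergy

variable {v : ℝ → ℝ}

lemma periodic_deriv {E : Type*} [NormedAddCommGroup E] [NormedSpace ℝ E] {f : ℝ → E} {T : ℝ}
    (hf : Function.Periodic f T) : Function.Periodic (deriv f) T := fun x => by
  rw [← deriv_comp_add_const, funext hf]

lemma integral_eq_zero_of_hasDerivAt_of_periodic {E : Type*} [NormedAddCommGroup E]
    [NormedSpace ℝ E] [CompleteSpace E] {f f' : ℝ → E} {a b T : ℝ}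
    (hderiv : ∀ x, HasDerivAt f (f' x) x) (hf' : Continuous f') (hf : Function.Periodic f T)
    (hab : a + T = b) : ∫ x in a..b, f' x = 0 := by
  rw [intervalIntegral.integral_eq_sub_of_hasDerivAt (fun x _ => hderiv x)
    (hf'.intervalIntegrable _ _), ← hab, hf a, sub_self]

lemma neg_pi_add_two_pi : -Real.pi + 2 * Real.pi = Real.pi := by ring

lemma L2inner_mul_dx_self (hv : ContDiff ℝ 1 v) (hper : Function.Periodic v (2 * Real.pi)) :
    L2inner (fun x => v x * dx v x) v = 0 := by
  have hv' : Continuous (deriv v) := hv.continuous_deriv le_rfl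
  have hderiv (x : ℝ) : HasDerivAt (fun y => v y ^ 3 / 3) (v x * deriv v x * v x) x :=
    (((hv.differentiable one_ne_zero x).hasDerivAt.fun_pow 3).div_const 3).congr_deriv (by
      simp only [Nat.cast_ofNat, Nat.add_one_sub_one]
      ring)
  exact integral_eq_zero_of_hasDerivAt_of_periodic hderiv
    ((hv.continuous.mul hv').mul hv.continuous) (fun x => by simp only [hper x])
    neg_pi_add_two_pi

lemma L2inner_dx3_self (hv : ContDiff ℝ 3 v) (hper : Function.Periodic v (2 * Real.pi)) :
    L2inner (dx3 v) v = 0 := by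
  have hv₁ : ContDiff ℝ 2 (deriv v) := (contDiff_succ_iff_deriv.mp hv).2.2
  have hv₂ : ContDiff ℝ 1 (deriv (deriv v)) := (contDiff_succ_iff_deriv.mp hv₁).2.2
  have hv₃ : Continuous (deriv (deriv (deriv v))) := hv₂.continuous_deriv le_rfl
  have hderiv (x : ℝ) : HasDerivAt (fun y => deriv (deriv v) y * v y - deriv v y ^ 2 / 2)
      (deriv (deriv (deriv v)) x * v x) x := by
    have hd₀ := (hv.differentiable (by norm_num) x).hasDerivAt
    have hd₁ := (hv₁.differentiable (by norm_num) x).hasDerivAt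
    have hd₂ := (hv₂.differentiable (by norm_num) x).hasDerivAt
    exact ((hd₂.mul hd₀).sub ((hd₁.fun_pow 2).div_const 2)).congr_deriv (by
      simp only [Nat.cast_ofNat, Nat.add_one_sub_one, pow_one]
      ring)
  have hper₁ := periodic_deriv hper
  exact integral_eq_zero_of_hasDerivAt_of_periodic hderiv (hv₃.mul hv.continuous)
    (fun x => by simp only [hper x, hper₁ x, periodic_deriv hper₁ x]) neg_pi_add_two_pi

lemma eq_zero_of_L2inner_self_eq_zero (hv : Continuous v)
    (hper : Function.Periodic v (2 * Real.pi)) (hzero : L2inner v v = 0) : v = 0 := by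
  have hvanish : ∀ x ∈ Set.Icc (-Real.pi) Real.pi, v x = 0 := by
    by_contra! hne
    obtain ⟨x, hx, hvx⟩ := hne
    exact (intervalIntegral.integral_pos (by linarith [Real.pi_pos]) (by fun_prop)
      (fun y _ => mul_self_nonneg _) ⟨x, hx, mul_self_pos.mpr hvx⟩).ne' hzero
  ext x
  obtain ⟨y, hy, hxy⟩ := hper.exists_mem_Ico Real.two_pi_pos x (-Real.pi)
  rw [hxy]
  exact hvanish y ⟨hy.1, by linarith [hy.2]⟩

end PeriodicEnergy

section TrigonometricPolynomials

open ComplexConjugate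

/-- The Fourier mode `x ↦ e^{ikx}`, in the form used by `InSN`, `PN` and `fCoeff`. -/
def fourierMode (k : ℤ) (x : ℝ) : ℂ := Complex.exp (Complex.I * (k : ℂ) * (x : ℂ))

lemma fourierMode_add (k l : ℤ) (x : ℝ) :
    fourierMode (k + l) x = fourierMode k x * fourierMode l x := by
  rw [fourierMode, fourierMode, fourierMode, ← Complex.exp_add]
  push_cast
  ring_nf

lemma conj_fourierMode (k : ℤ) (x : ℝ) : conj (fourierMode k x) = fourierMode (-k) x := by
  simp [fourierMode, ← Complex.exp_conj]

lemma contDiff_fourierMode {n : WithTop ℕ∞} (k : ℤ) : ContDiff ℝ n (fourierMode k) :=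
  (contDiff_const.mul Complex.ofRealCLM.contDiff).cexp

lemma continuous_fourierMode (k : ℤ) : Continuous (fourierMode k) :=
  (contDiff_fourierMode (n := 0) k).continuous

lemma hasDerivAt_fourierMode (k : ℤ) (x : ℝ) :
    HasDerivAt (fourierMode k) (Complex.I * k * fourierMode k x) x :=
  (Complex.ofRealCLM.hasDerivAt.const_mul (Complex.I * (k : ℂ))).cexp.congr_deriv (by
    simp [fourierMode, mul_comm])

lemma periodic_fourierMode (k : ℤ) : Function.Periodic (fourierMode k) (2 * Real.pi) := fun x => by
  have hshift : Complex.I * (k : ℂ) * ((x + 2 * Real.pi : ℝ) : ℂ)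
      = Complex.I * (k : ℂ) * (x : ℂ) + k * (2 * Real.pi * Complex.I) := by
    push_cast
    ring
  rw [fourierMode, hshift, Complex.exp_periodic.int_mul k]
  rfl

lemma integral_fourierMode (k : ℤ) :
    ∫ x in (-Real.pi)..Real.pi, fourierMode k x = if k = 0 then 2 * (Real.pi : ℂ) else 0 := by
  obtain rfl | hk := eq_or_ne k 0
  · simp [fourierMode, two_mul]
  · have hcoeff : Complex.I * (k : ℂ) ≠ 0 :=
      mul_ne_zero Complex.I_ne_zero (Int.cast_ne_zero.mpr hk)
    rw [if_neg hk]
    exact integral_eq_zero_of_hasDerivAt_of_periodic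
      (fun x => ((hasDerivAt_fourierMode k x).div_const _).congr_deriv
        (mul_div_cancel_left₀ _ hcoeff))
      (continuous_fourierMode k)
      (fun x => by simp only [periodic_fourierMode k x]) neg_pi_add_two_pi

lemma fCoeff_eq_integral_fourierMode (u : ℝ → ℝ) (k : ℤ) :
    fCoeff u k = (1 / (2 * Real.pi)) * ∫ x in (-Real.pi)..Real.pi, fourierMode (-k) x * u x := by
  simp [fCoeff, fourierMode]

lemma conj_fCoeff (u : ℝ → ℝ) (k : ℤ) : conj (fCoeff u k) = fCoeff u (-k) := by
  have hconj : conj (∫ x in (-Real.pi)..Real.pi, fourierMode (-k) x * u x)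
      = ∫ x in (-Real.pi)..Real.pi, fourierMode (- -k) x * u x := by
    rw [← intervalIntegral.intervalIntegral_conj]
    simp only [map_mul, conj_fourierMode, Complex.conj_ofReal]
  rw [fCoeff_eq_integral_fourierMode, fCoeff_eq_integral_fourierMode, map_mul, hconj]
  simp [map_ofNat]

variable {N : ℕ} {v : ℝ → ℝ} {c : ℤ → ℂ}

/-- The complex trigonometric polynomial `∑_{|k| ≤ N} c_k e^{ikx}`. Only the coefficients with
`|k| ≤ N` matter. The elements of `S_N` are the real parts of these functions. -/
def trigPoly (N : ℕ) (c : ℤ → ℂ) (x : ℝ) : ℂ :=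
  ∑ k ∈ Finset.Icc (-(N : ℤ)) (N : ℤ), c k * fourierMode k x

lemma contDiff_trigPoly {n : WithTop ℕ∞} (N : ℕ) (c : ℤ → ℂ) : ContDiff ℝ n (trigPoly N c) :=
  ContDiff.sum fun k _ => contDiff_const.mul (contDiff_fourierMode k)

lemma periodic_trigPoly (N : ℕ) (c : ℤ → ℂ) : Function.Periodic (trigPoly N c) (2 * Real.pi) :=
  fun x => by simp only [trigPoly, periodic_fourierMode _ x]

lemma hasDerivAt_trigPoly (N : ℕ) (c : ℤ → ℂ) (x : ℝ) :
    HasDerivAt (trigPoly N c) (trigPoly N (fun k => c k * (Complex.I * k)) x) x := by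
  simp only [trigPoly, mul_assoc (c _)]
  exact HasDerivAt.fun_sum fun k _ => (hasDerivAt_fourierMode k x).const_mul (c k)

lemma conj_trigPoly (N : ℕ) (c : ℤ → ℂ) (x : ℝ) :
    conj (trigPoly N c x) = trigPoly N (fun k => conj (c (-k))) x := by
  simp only [trigPoly, map_sum, map_mul, conj_fourierMode]
  refine Finset.sum_equiv (Equiv.neg ℤ) (fun k => ?_) fun k _ => by rw [Equiv.neg_apply, neg_neg]
  rw [Equiv.neg_apply, Finset.mem_Icc, Finset.mem_Icc]
  omega

lemma ofReal_re_trigPoly (N : ℕ) (c : ℤ → ℂ) (x : ℝ) :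
    ((trigPoly N c x).re : ℂ) = trigPoly N (fun k => (c k + conj (c (-k))) / 2) x := by
  rw [Complex.re_eq_add_conj, conj_trigPoly]
  simp only [trigPoly, ← Finset.sum_add_distrib, Finset.sum_div]
  exact Finset.sum_congr rfl fun k _ => by ring

lemma inSN_iff_exists_eq_re_trigPoly : InSN N v ↔ ∃ c, v = fun x => (trigPoly N c x).re := by
  constructor
  · rintro ⟨c, hc⟩
    exact ⟨c, funext fun x => (congrArg Complex.re (hc x))⟩
  · rintro ⟨c, rfl⟩
    exact ⟨_, ofReal_re_trigPoly N c⟩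

lemma integral_fourierMode_mul_trigPoly (N : ℕ) (c : ℤ → ℂ) (j : ℤ)
    (hj : j ∈ Finset.Icc (-(N : ℤ)) N) :
    ∫ x in (-Real.pi)..Real.pi, fourierMode (-j) x * trigPoly N c x = 2 * Real.pi * c j := by
  have hprod (x : ℝ) : fourierMode (-j) x * trigPoly N c x
      = ∑ k ∈ Finset.Icc (-(N : ℤ)) N, c k * fourierMode (k - j) x := by
    rw [trigPoly, Finset.mul_sum]
    refine Finset.sum_congr rfl fun k _ => ?_
    rw [sub_eq_add_neg, fourierMode_add]
    ring
  simp only [hprod]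
  have hint (k : ℤ) : IntervalIntegrable (fun x => c k * fourierMode (k - j) x)
      MeasureTheory.volume (-Real.pi) Real.pi :=
    (continuous_const.mul (continuous_fourierMode _)).intervalIntegrable _ _
  rw [intervalIntegral.integral_finsetSum fun k _ => hint k]
  simp only [intervalIntegral.integral_const_mul, integral_fourierMode, sub_eq_zero]
  simp [hj, mul_comm]

lemma fCoeff_eq_of_eq_trigPoly (hv : ∀ x, (v x : ℂ) = trigPoly N c x) {k : ℤ}
    (hk : k ∈ Finset.Icc (-(N : ℤ)) N) : fCoeff v k = c k := by
  rw [fCoeff_eq_integral_fourierMode]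
  simp only [hv]
  rw [integral_fourierMode_mul_trigPoly N c k hk]
  field_simp

lemma ofReal_PN (N : ℕ) (u : ℝ → ℝ) (x : ℝ) : (PN N u x : ℂ) = trigPoly N (fCoeff u) x := by
  change ((trigPoly N (fCoeff u) x).re : ℂ) = _
  rw [ofReal_re_trigPoly]
  simp [conj_fCoeff]

lemma inSN_PN (N : ℕ) (u : ℝ → ℝ) : InSN N (PN N u) := ⟨fCoeff u, ofReal_PN N u⟩

lemma L2inner_re_trigPoly {w : ℝ → ℝ} (hw : Continuous w) (N : ℕ) (c : ℤ → ℂ) :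
    L2inner w (fun x => (trigPoly N c x).re)
      = (∑ k ∈ Finset.Icc (-(N : ℤ)) N, c k * (2 * Real.pi * fCoeff w (-k))).re := by
  have hw_ofReal : Continuous fun x => (w x : ℂ) := by fun_prop
  have hint : IntervalIntegrable (fun x => trigPoly N c x * w x) MeasureTheory.volume
      (-Real.pi) Real.pi :=
    ((contDiff_trigPoly (n := 0) N c).continuous.mul hw_ofReal).intervalIntegrable _ _
  have hmode (k : ℤ) : IntervalIntegrable (fun x => c k * (fourierMode k x * w x))
      MeasureTheory.volume (-Real.pi) Real.pi :=
    (continuous_const.mul ((continuous_fourierMode k).mul hw_ofReal)).intervalIntegrable _ _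
  have hcoeff (k : ℤ) : ∫ x in (-Real.pi)..Real.pi, fourierMode k x * w x
      = 2 * Real.pi * fCoeff w (-k) := by
    rw [fCoeff_eq_integral_fourierMode, neg_neg]
    field_simp
  calc L2inner w (fun x => (trigPoly N c x).re)
      = ∫ x in (-Real.pi)..Real.pi, (trigPoly N c x * w x).re := by
        simp only [L2inner, Complex.re_mul_ofReal]
        simp only [mul_comm]
    _ = (∫ x in (-Real.pi)..Real.pi, trigPoly N c x * w x).re :=
        Complex.reCLM.intervalIntegral_comp_comm hint
    _ = _ := by
        simp only [trigPoly, Finset.sum_mul, mul_assoc (c _)]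
        rw [intervalIntegral.integral_finsetSum fun k _ => hmode k]
        simp only [intervalIntegral.integral_const_mul, hcoeff]

namespace InSN

protected lemma contDiff {n : WithTop ℕ∞} (hv : InSN N v) : ContDiff ℝ n v := by
  obtain ⟨c, rfl⟩ := inSN_iff_exists_eq_re_trigPoly.mp hv
  exact Complex.reCLM.contDiff.comp (contDiff_trigPoly N c)

protected lemma continuous (hv : InSN N v) : Continuous v := (hv.contDiff (n := 0)).continuous

protected lemma periodic (hv : InSN N v) : Function.Periodic v (2 * Real.pi) := by
  obtain ⟨c, rfl⟩ := inSN_iff_exists_eq_re_trigPoly.mp hv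
  exact fun x => by simp only [periodic_trigPoly N c x]

protected lemma dx (hv : InSN N v) : InSN N (dx v) := by
  obtain ⟨c, rfl⟩ := inSN_iff_exists_eq_re_trigPoly.mp hv
  exact inSN_iff_exists_eq_re_trigPoly.mpr ⟨_, funext fun x =>
    (Complex.reCLM.hasFDerivAt.comp_hasDerivAt x (hasDerivAt_trigPoly N c x)).deriv⟩

end InSN

lemma L2inner_PN {w χ : ℝ → ℝ} (hw : Continuous w) (hχ : InSN N χ) :
    L2inner (PN N w) χ = L2inner w χ := by
  obtain ⟨c, rfl⟩ := inSN_iff_exists_eq_re_trigPoly.mp hχ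
  rw [L2inner_re_trigPoly (inSN_PN N w).continuous, L2inner_re_trigPoly hw]
  congr 1
  refine Finset.sum_congr rfl fun k hk => ?_
  rw [fCoeff_eq_of_eq_trigPoly (ofReal_PN N w) (by grind)]

end TrigonometricPolynomials

section CompositionStages

variable {N : ℕ} {v : ℝ → ℝ}

lemma L2inner_Fmap_self (hv : InSN N v) : L2inner (Fmap N v) v = 0 := by
  have hcont := hv.continuous
  have hnonlinear : Continuous fun x => v x * dx v x := hcont.mul hv.dx.continuous
  have hint₁ : IntervalIntegrable (fun x => -dx3 v x * v x) MeasureTheory.volume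
      (-Real.pi) Real.pi := (hv.dx.dx.dx.continuous.neg.mul hcont).intervalIntegrable _ _
  have hint₂ : IntervalIntegrable (fun x => PN N (fun y => v y * dx v y) x * v x)
      MeasureTheory.volume (-Real.pi) Real.pi :=
    ((inSN_PN N _).continuous.mul hcont).intervalIntegrable _ _
  calc L2inner (Fmap N v) v
      = -L2inner (dx3 v) v - L2inner (PN N fun x => v x * dx v x) v := by
        simp only [L2inner, Fmap, sub_mul]
        rw [intervalIntegral.integral_sub hint₁ hint₂]
        simp only [neg_mul, intervalIntegral.integral_neg]
    _ = 0 := by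
        rw [L2inner_PN hnonlinear hv, L2inner_dx3_self hv.contDiff hv.periodic,
          L2inner_mul_dx_self hv.contDiff hv.periodic, neg_zero, sub_zero]

lemma fCoeff_add {u w : ℝ → ℝ} (hu : Continuous u) (hw : Continuous w) (k : ℤ) :
    fCoeff (fun x => u x + w x) k = fCoeff u k + fCoeff w k := by
  have hint {f : ℝ → ℝ} (hf : Continuous f) : IntervalIntegrable
      (fun x => fourierMode (-k) x * f x) MeasureTheory.volume (-Real.pi) Real.pi :=
    ((continuous_fourierMode _).mul (Complex.continuous_ofReal.comp hf)).intervalIntegrable _ _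
  simp only [fCoeff_eq_integral_fourierMode, Complex.ofReal_add, mul_add]
  rw [intervalIntegral.integral_add (hint hu) (hint hw), mul_add]

lemma fCoeff_const_mul (a : ℝ) (u : ℝ → ℝ) (k : ℤ) :
    fCoeff (fun x => a * u x) k = a * fCoeff u k := by
  simp only [fCoeff_eq_integral_fourierMode, Complex.ofReal_mul, mul_left_comm _ (a : ℂ),
    intervalIntegral.integral_const_mul]

lemma PN_add {u w : ℝ → ℝ} (hu : Continuous u) (hw : Continuous w) (x : ℝ) :
    PN N (fun y => u y + w y) x = PN N u x + PN N w x := by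
  simp only [PN, fCoeff_add hu hw, add_mul, Finset.sum_add_distrib, Complex.add_re]

lemma PN_const_mul (a : ℝ) (u : ℝ → ℝ) (x : ℝ) :
    PN N (fun y => a * u y) x = a * PN N u x := by
  simp only [PN, fCoeff_const_mul, mul_assoc (a : ℂ), ← Finset.mul_sum, Complex.re_ofReal_mul]

lemma PN_eq_self (hv : InSN N v) : PN N v = v := by
  obtain ⟨c, hc⟩ := hv
  ext x
  rw [← Complex.ofReal_inj, ofReal_PN, hc]
  exact Finset.sum_congr rfl fun k hk => by rw [fCoeff_eq_of_eq_trigPoly hc hk]; rfl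

/-- The space `S_N` of real trigonometric polynomials of degree at most `N`, as a subspace of the
continuous functions. -/
def trigSpace (N : ℕ) : Submodule ℝ C(ℝ, ℝ) where
  carrier := {v | InSN N v}
  zero_mem' := ⟨0, fun x => by simp⟩
  add_mem' := by
    rintro u w ⟨c, hc⟩ ⟨d, hd⟩
    exact ⟨c + d, fun x => by simp [hc, hd, add_mul, Finset.sum_add_distrib]⟩
  smul_mem' := by
    rintro a u ⟨c, hc⟩
    exact ⟨a • c, fun x => by simp [hc, mul_assoc, Finset.mul_sum]⟩

instance (N : ℕ) : FiniteDimensional ℝ (trigSpace N) := by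
  let coeff : trigSpace N →ₗ[ℝ] Finset.Icc (-(N : ℤ)) N → ℂ :=
    { toFun v k := fCoeff v k
      map_add' u w := funext fun k => fCoeff_add u.1.continuous w.1.continuous k
      map_smul' a u := funext fun k => (fCoeff_const_mul a u k).trans Complex.real_smul.symm }
  refine FiniteDimensional.of_injective coeff fun u w huw => Subtype.ext (DFunLike.coe_injective ?_)
  rw [← PN_eq_self u.2, ← PN_eq_self w.2]
  ext x
  exact congrArg Complex.re (Finset.sum_congr rfl fun k hk =>
    congrArg (· * _) (congrFun huw ⟨k, hk⟩))

/-- The inner product `L2inner` on `S_N`. -/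
abbrev trigInnerCore (N : ℕ) : InnerProductSpace.Core ℝ (trigSpace N) where
  inner u w := L2inner u w
  conj_inner_symm u w := by simp [L2inner, mul_comm]
  re_inner_nonneg u := intervalIntegral.integral_nonneg (by linarith [Real.pi_pos])
    fun x _ => mul_self_nonneg (u.1 x)
  add_left u v w := by
    have hint (f g : C(ℝ, ℝ)) : IntervalIntegrable (fun x => f x * g x)
      MeasureTheory.volume (-Real.pi) Real.pi := (f * g).continuous.intervalIntegrable _ _
    simp [L2inner, add_mul, intervalIntegral.integral_add (hint _ _) (hint _ _)]
  smul_left u w a := by simp [L2inner, mul_assoc]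
  definite u hu := Subtype.ext <| DFunLike.coe_injective <|
    eq_zero_of_L2inner_self_eq_zero u.1.continuous u.2.periodic hu

/-- The projection `P_N` as a linear map from the continuous functions onto `S_N`. -/
def trigProj (N : ℕ) : C(ℝ, ℝ) →ₗ[ℝ] trigSpace N where
  toFun u := ⟨⟨PN N u, (inSN_PN N u).continuous⟩, inSN_PN N u⟩
  map_add' u w := by
    ext x
    exact PN_add u.continuous w.continuous x
  map_smul' a u := by
    ext x
    exact PN_const_mul a u x

/-- The derivative `∂ₓ` as a linear endomorphism of `S_N`. -/
def trigDeriv (N : ℕ) : trigSpace N →ₗ[ℝ] trigSpace N where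
  toFun v := ⟨⟨dx v, v.2.dx.continuous⟩, v.2.dx⟩
  map_add' u w := by
    ext x
    exact deriv_add (u.2.contDiff.differentiable one_ne_zero x)
      (w.2.contDiff.differentiable one_ne_zero x)
  map_smul' a u := by
    ext x
    exact deriv_const_mul_field a

/-- The bilinear map `(u, w) ↦ -P_N(u ∂ₓ w)` on `S_N`, whose diagonal is the nonlinear part of
`F`. -/
def trigConvection (N : ℕ) : trigSpace N →ₗ[ℝ] trigSpace N →ₗ[ℝ] trigSpace N :=
  ((LinearMap.mul ℝ C(ℝ, ℝ)).compl₁₂ (trigSpace N).subtype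
    ((trigSpace N).subtype ∘ₗ trigDeriv N)).compr₂ (-trigProj N)

lemma coe_neg_trigDeriv_add_trigConvection (v : trigSpace N) :
    ⇑((-(trigDeriv N ^ 3)) v + trigConvection N v v).1 = Fmap N v :=
  funext fun _ => (sub_eq_add_neg _ _).symm

lemma exists_inSN_midpoint_stage (a : ℝ) (U : ℝ → ℝ) (hU : InSN N U) :
    ∃ Y, InSN N Y ∧ ∀ x, Y x = U x + a * Fmap N (fun y => (Y y + U y) / 2) x := by
  obtain ⟨Y, hY⟩ := exists_midpoint_eq_of_quadratic (trigInnerCore N) (-(trigDeriv N ^ 3))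
    (trigConvection N) (fun v => by
      change L2inner _ _ = 0
      rw [coe_neg_trigDeriv_add_trigConvection, L2inner_Fmap_self v.2])
    a ⟨⟨U, hU.continuous⟩, hU⟩
  refine ⟨Y, Y.2, fun x => ?_⟩
  have hYx := congrArg (fun w : trigSpace N => w.1 x) hY
  have hmid : (fun y => (Y.1 y + U y) / 2)
      = ⇑((2⁻¹ : ℝ) • (Y + ⟨⟨U, hU.continuous⟩, hU⟩)).1 := by
    ext y
    exact div_eq_inv_mul _ _
  rw [hmid, ← coe_neg_trigDeriv_add_trigConvection]
  exact hYx

end CompositionStages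

/-- Proposition 4.2: existence of the stages of one step of the
`s`-stage IMR-composition scheme, for any time step `k > 0`. -/
theorem composition_stages_exist
    (N : ℕ) (hN : 1 ≤ N) (k : ℝ) (hk : 0 < k) (s : ℕ) (hs : 1 ≤ s)
    (b : ℕ → ℝ) (hb : ∀ i, 1 ≤ i → i ≤ s → b i ≠ 0)
    (U : ℝ → ℝ) (hU : InSN N U) :
    ∃ Y : ℕ → ℝ → ℝ, (∀ x : ℝ, Y 0 x = U x) ∧
      (∀ i, 1 ≤ i → i ≤ s → InSN N (Y i)) ∧
      (∀ i, 1 ≤ i → i ≤ s → ∀ x : ℝ,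
        Y i x = Y (i-1) x + k * b i * Fmap N (fun y => (Y i y + Y (i-1) y) / 2) x) := by
  choose! next hnext_mem hnext_eq using exists_inSN_midpoint_stage (N := N)
  let Y : ℕ → ℝ → ℝ := fun n => Nat.rec U (fun i y => next (k * b (i + 1)) y) n
  have hY (n : ℕ) : InSN N (Y n) := by
    induction n with
    | zero => exact hU
    | succ i ih => exact hnext_mem _ _ ih
  refine ⟨Y, fun x => rfl, fun i _ _ => hY i, fun i hi _ x => ?_⟩
  obtain ⟨j, rfl⟩ := Nat.exists_eq_add_of_le' hi
  exact hnext_eq _ _ (hY j) x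

end KdVSpec
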